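/- arXiv:1210.4673 — 9 statements merged into one kernel-verified Lean document; each statement's English description precedes it below -/
import Mathlib

section
/- Let $I$ be a nonempty finite index set, let $w_i > 0$ for $i \in I$, let $S = \sum_{i \in I} w_i$, and let $D > 0$ and $f_{rel} > 0$. Then: (a) for every family of speeds $(f_i)_{i \in I}$ with $f_i \geq f_{rel}$ for all $i$ and $\sum_{i \in I} w_i / f_i \leq D$, one has $\sum_{i \in I} w_i f_i^2 \geq S \cdot (\max(f_{rel}, S/D))^2$; and (b) the constant family $f_i = \max(f_{rel}, S/D)$ satisfies both constraints and attains this bound. In other words, the minimum energy for executing a chain of tasks once each, within deadline $D$ and with every speed at least $f_{rel}$, equals $S \cdot (\max(f_{rel}, S/D))^2$, achieved by running every task at speed $\max(f_{rel}, S/D)$. -/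
open Finset

/-!
The total work divided by the total time is the weighted harmonic mean of the speeds, so it is at
least `frel`, and by the deadline it is at least `S / D`. The energy per unit of work is a convex
function of the time per unit of work, so by Jensen's inequality running all the work at this mean
speed costs no more energy than the given speeds. That energy increases with the speed, whence the
lower bound.
-/

theorem convexOn_inv_pow {K : Type*} [Field K] [LinearOrder K] [IsStrictOrderedRing K] (n : ℕ) :
    ConvexOn K (Set.Ioi 0) fun x : K ↦ x⁻¹ ^ n := by
  simpa using convexOn_zpow (𝕜 := K) (-n)

section MeanSpeed

variable {ι K : Type*} [Field K]

/-- The mean speed at which a chain of tasks `i ∈ s` of weights `w i` is executed, when task `i`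
runs at speed `f i`: total work over total time, the weighted harmonic mean of the speeds. -/
def meanSpeed (s : Finset ι) (w f : ι → K) : K :=
  (∑ i ∈ s, w i) / ∑ i ∈ s, w i / f i

theorem meanSpeed_eq_inv_centerMass (s : Finset ι) (w f : ι → K) :
    meanSpeed s w f = (s.centerMass w fun i ↦ (f i)⁻¹)⁻¹ := by
  simp [meanSpeed, centerMass, div_eq_mul_inv, mul_comm]

variable [LinearOrder K] [IsStrictOrderedRing K] {s : Finset ι} {w f : ι → K} {e : K → K} {a D : K}

theorem meanSpeed_pos (hw : ∀ i ∈ s, 0 ≤ w i) (hS : 0 < ∑ i ∈ s, w i)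
    (hf : ∀ i ∈ s, 0 < f i) : 0 < meanSpeed s w f := by
  rw [meanSpeed_eq_inv_centerMass]
  exact inv_pos.2 ((convex_Ioi 0).centerMass_mem hw hS fun i hi ↦ inv_pos.2 (hf i hi))

theorem sum_div_pos (hw : ∀ i ∈ s, 0 ≤ w i) (hS : 0 < ∑ i ∈ s, w i)
    (hf : ∀ i ∈ s, 0 < f i) : 0 < ∑ i ∈ s, w i / f i :=
  (div_pos_iff_of_pos_left hS).1 (meanSpeed_pos hw hS hf)

theorem le_meanSpeed (hw : ∀ i ∈ s, 0 ≤ w i) (hS : 0 < ∑ i ∈ s, w i)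
    (hf : ∀ i ∈ s, 0 < f i) (ha : ∀ i ∈ s, a ≤ f i) : a ≤ meanSpeed s w f := by
  rw [meanSpeed, le_div_iff₀ (sum_div_pos hw hS hf), mul_sum]
  refine sum_le_sum fun i hi ↦ ?_
  calc a * (w i / f i) ≤ f i * (w i / f i) :=
        mul_le_mul_of_nonneg_right (ha i hi) (div_nonneg (hw i hi) (hf i hi).le)
    _ = w i := mul_div_cancel₀ _ (hf i hi).ne'

theorem sum_div_le_meanSpeed (hw : ∀ i ∈ s, 0 ≤ w i) (hS : 0 < ∑ i ∈ s, w i)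
    (hf : ∀ i ∈ s, 0 < f i) (hD : ∑ i ∈ s, w i / f i ≤ D) :
    (∑ i ∈ s, w i) / D ≤ meanSpeed s w f :=
  div_le_div_of_nonneg_left hS.le (sum_div_pos hw hS hf) hD

theorem sum_mul_map_meanSpeed_le (he : ConvexOn K (Set.Ioi 0) fun x ↦ e x⁻¹)
    (hw : ∀ i ∈ s, 0 ≤ w i) (hS : 0 < ∑ i ∈ s, w i) (hf : ∀ i ∈ s, 0 < f i) :
    (∑ i ∈ s, w i) * e (meanSpeed s w f) ≤ ∑ i ∈ s, w i * e (f i) := by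
  have jensen := he.map_centerMass_le hw hS fun i hi ↦ inv_pos.2 (hf i hi)
  rw [← meanSpeed_eq_inv_centerMass] at jensen
  simpa [centerMass, Function.comp_def, le_inv_mul_iff₀ hS] using jensen

/-- Here `e x` is the energy per unit of work at speed `x`. -/
theorem chain_single_execution_optimal_general (he : ConvexOn K (Set.Ioi 0) fun x ↦ e x⁻¹)
    (he_mono : MonotoneOn e (Set.Ioi 0)) (hw : ∀ i ∈ s, 0 ≤ w i) (S D frel : K)
    (hS : S = ∑ i ∈ s, w i) (hS_pos : 0 < S) (hD : 0 < D) :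
    (∀ f : ι → K, (∀ i ∈ s, 0 < f i) → (∀ i ∈ s, frel ≤ f i) → ∑ i ∈ s, w i / f i ≤ D →
        S * e (max frel (S / D)) ≤ ∑ i ∈ s, w i * e (f i)) ∧
      0 < max frel (S / D) ∧ frel ≤ max frel (S / D) ∧
      ∑ i ∈ s, w i / max frel (S / D) ≤ D ∧
      ∑ i ∈ s, w i * e (max frel (S / D)) = S * e (max frel (S / D)) := by
  have hmax : 0 < max frel (S / D) := lt_max_of_lt_right (div_pos hS_pos hD)
  subst hS
  refine ⟨fun f hf hrel hdeadline ↦ ?_, hmax, le_max_left _ _, ?_, (sum_mul ..).symm⟩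
  · have hmean : max frel ((∑ i ∈ s, w i) / D) ≤ meanSpeed s w f :=
      max_le (le_meanSpeed hw hS_pos hf hrel) (sum_div_le_meanSpeed hw hS_pos hf hdeadline)
    calc (∑ i ∈ s, w i) * e (max frel ((∑ i ∈ s, w i) / D))
        ≤ (∑ i ∈ s, w i) * e (meanSpeed s w f) :=
          mul_le_mul_of_nonneg_left (he_mono hmax (hmax.trans_le hmean) hmean) hS_pos.le
      _ ≤ ∑ i ∈ s, w i * e (f i) := sum_mul_map_meanSpeed_le he hw hS_pos hf
  · rw [← sum_div]
    exact (div_le_comm₀ hmax hD).2 (le_max_right _ _)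

end MeanSpeed

/-- Minimum energy for a chain of tasks executed once each within deadline `D`,
with every speed at least `frel`, equals `S * (max frel (S/D))^2`, achieved by
running every task at speed `max frel (S/D)`. -/
theorem chain_single_execution_optimal
    {I : Type*} [Fintype I] [Nonempty I] (w : I → ℝ) (hw : ∀ i, 0 < w i)
    (S D frel : ℝ) (hS : S = ∑ i, w i) (hD : 0 < D) (hfrel : 0 < frel) :
    (∀ f : I → ℝ, (∀ i, frel ≤ f i) → (∑ i, w i / f i) ≤ D →
        S * (max frel (S / D)) ^ 2 ≤ ∑ i, w i * (f i) ^ 2) ∧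
    ((∀ i : I, frel ≤ max frel (S / D)) ∧
      (∑ i, w i / max frel (S / D)) ≤ D ∧
      (∑ i, w i * (max frel (S / D)) ^ 2) = S * (max frel (S / D)) ^ 2) := by
  obtain ⟨hle, -, hrel, hfeasible⟩ := chain_single_execution_optimal_general (convexOn_inv_pow 2)
    (pow_left_monotoneOn.mono fun _ ↦ le_of_lt) (fun i _ ↦ (hw i).le) S D frel hS
    (hS ▸ sum_pos (fun _ _ ↦ hw _) univ_nonempty) hD
  exact ⟨fun f hf ↦ hle f (fun i _ ↦ hfrel.trans_le (hf i)) fun i _ ↦ hf i, fun _ ↦ hrel, hfeasible⟩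
end

section
/- Let $I$ be a finite index set of tasks with weights $w_i > 0$, let $S = \sum_{i \in I} w_i$, let $p \geq 1$ be a number of processors, let $D > 0$ be a deadline, let $a : I \to \{1, \dots, p\}$ be any assignment of tasks to processors, and let $f_i > 0$ be speeds such that for every processor $q$, $\sum_{i : a(i) = q} w_i / f_i \leq D$. Then the total energy satisfies $\sum_{i \in I} w_i f_i^2 \geq S^3 / (pD)^2$. -/
open Finset

/-! If task `i` runs for time `tᵢ = wᵢ / fᵢ`, then `S = ∑ tᵢ fᵢ` and the energy is
`E = ∑ tᵢ fᵢ ^ 3`. With `T = ∑ tᵢ`, Jensen's inequality for `x ↦ x ^ 3` and the weights `tᵢ / T`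
gives `(S / T) ^ 3 ≤ E / T`, that is, `S ^ 3 ≤ T ^ 2 E`. Adding up the loads of the `p` processors
gives `T ≤ p D`. -/

section OrderedField

variable {K I : Type*} [Field K] [LinearOrder K] [IsStrictOrderedRing K] {s : Finset I}

theorem pow_sum_mul_le_pow_sum_mul_sum_mul_pow {t x : I → K} (ht : ∀ i ∈ s, 0 ≤ t i)
    (hx : ∀ i ∈ s, 0 ≤ x i) (n : ℕ) :
    (∑ i ∈ s, t i * x i) ^ (n + 1) ≤ (∑ i ∈ s, t i) ^ n * ∑ i ∈ s, t i * x i ^ (n + 1) := by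
  obtain hT | hT := (sum_nonneg ht).eq_or_lt
  · have ht_zero : ∀ i ∈ s, t i = 0 := (sum_eq_zero_iff_of_nonneg ht).1 hT.symm
    have hsum_zero (y : I → K) : ∑ i ∈ s, t i * y i = 0 :=
      sum_eq_zero fun i hi ↦ by rw [ht_zero i hi, zero_mul]
    simp [hsum_zero]
  · have jensen := (convexOn_pow (𝕜 := K) (n + 1)).map_centerMass_le ht hT hx
    simp only [centerMass, smul_eq_mul, Function.comp_apply] at jensen
    calc (∑ i ∈ s, t i * x i) ^ (n + 1)
        = (∑ i ∈ s, t i) ^ (n + 1) * ((∑ i ∈ s, t i)⁻¹ * ∑ i ∈ s, t i * x i) ^ (n + 1) := by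
          rw [← mul_pow, mul_inv_cancel_left₀ hT.ne']
      _ ≤ (∑ i ∈ s, t i) ^ (n + 1) * ((∑ i ∈ s, t i)⁻¹ * ∑ i ∈ s, t i * x i ^ (n + 1)) := by
          gcongr
      _ = (∑ i ∈ s, t i) ^ n * ∑ i ∈ s, t i * x i ^ (n + 1) := by
          rw [pow_succ, mul_assoc, mul_inv_cancel_left₀ hT.ne']

theorem pow_sum_le_pow_sum_div_mul_sum_mul_pow {w f : I → K} (hw : ∀ i ∈ s, 0 ≤ w i)
    (hf : ∀ i ∈ s, 0 < f i) (n : ℕ) :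
    (∑ i ∈ s, w i) ^ (n + 1) ≤ (∑ i ∈ s, w i / f i) ^ n * ∑ i ∈ s, w i * f i ^ n := by
  have hweight : ∑ i ∈ s, w i = ∑ i ∈ s, w i / f i * f i :=
    sum_congr rfl fun i hi ↦ (div_mul_cancel₀ _ (hf i hi).ne').symm
  have henergy : ∑ i ∈ s, w i * f i ^ n = ∑ i ∈ s, w i / f i * f i ^ (n + 1) :=
    sum_congr rfl fun i hi ↦ by rw [pow_succ', ← mul_assoc, div_mul_cancel₀ _ (hf i hi).ne']
  rw [hweight, henergy]
  exact pow_sum_mul_le_pow_sum_mul_sum_mul_pow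
    (fun i hi ↦ div_nonneg (hw i hi) (hf i hi).le) (fun i hi ↦ (hf i hi).le) n

theorem indep_energy_lower_bound_general {P : Type*} [Fintype P] [DecidableEq P] {w f : I → K}
    (hw : ∀ i ∈ s, 0 ≤ w i) (hf : ∀ i ∈ s, 0 < f i) {a : I → P} {D : K}
    (hload : ∀ q, ∑ i ∈ s with a i = q, w i / f i ≤ D) (n : ℕ) :
    (∑ i ∈ s, w i) ^ (n + 1) ≤ (Fintype.card P * D) ^ n * ∑ i ∈ s, w i * f i ^ n := by
  have htime : ∑ i ∈ s, w i / f i ≤ Fintype.card P * D := by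
    rw [← sum_fiberwise s a, ← nsmul_eq_mul]
    exact sum_le_card_nsmul univ _ D fun q _ ↦ hload q
  have htime_nonneg : 0 ≤ ∑ i ∈ s, w i / f i :=
    sum_nonneg fun i hi ↦ div_nonneg (hw i hi) (hf i hi).le
  have henergy_nonneg : 0 ≤ ∑ i ∈ s, w i * f i ^ n :=
    sum_nonneg fun i hi ↦ mul_nonneg (hw i hi) (pow_nonneg (hf i hi).le n)
  calc (∑ i ∈ s, w i) ^ (n + 1)
      ≤ (∑ i ∈ s, w i / f i) ^ n * ∑ i ∈ s, w i * f i ^ n :=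
        pow_sum_le_pow_sum_div_mul_sum_mul_pow hw hf n
    _ ≤ (Fintype.card P * D) ^ n * ∑ i ∈ s, w i * f i ^ n := by gcongr

end OrderedField

/-- Lower bound on the energy for independent tasks on `p` processors with
deadline `D`: the total energy is at least `S^3 / (p*D)^2`. -/
theorem indep_energy_lower_bound
    {I : Type*} [Fintype I] (w : I → ℝ) (hw : ∀ i, 0 < w i)
    (S : ℝ) (hS : S = ∑ i, w i)
    (p : ℕ) (hp : 1 ≤ p) (D : ℝ) (hD : 0 < D)
    (a : I → Fin p) (f : I → ℝ) (hf : ∀ i, 0 < f i)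
    (hload : ∀ q : Fin p,
      (∑ i ∈ Finset.univ.filter (fun i => a i = q), w i / f i) ≤ D) :
    S ^ 3 / ((p : ℝ) * D) ^ 2 ≤ ∑ i, w i * (f i) ^ 2 := by
  rw [hS, div_le_iff₀' (by positivity)]
  simpa using indep_energy_lower_bound_general (fun i _ ↦ (hw i).le) (fun i _ ↦ hf i) hload 2
end

section
/- Let $w_1, w_2 > 0$ and $T > 0$. Define $g_2 = (2^{1/3} w_1 + w_2)/T$ and $g_1 = 2^{-1/3} g_2$. Then $w_1/g_1 + w_2/g_2 = T$, and for all $f_1, f_2 > 0$ with $w_1/f_1 + w_2/f_2 = T$, one has $2 w_1 f_1^2 + w_2 f_2^2 \geq 2 w_1 g_1^2 + w_2 g_2^2$. That is, the minimum of $2 w_1 f_1^2 + w_2 f_2^2$ subject to the time constraint $w_1/f_1 + w_2/f_2 = T$ is attained when $f_1 = 2^{-1/3} f_2$. -/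
/-!
As a function of the execution time `x = 1 / f` per unit of work, the energy `f ^ p = x ^ (-p)` is
convex, so it lies above its tangent at `1 / g`, whose slope is `-p * g ^ (p + 1)`. If the `m i`
executions of task `i` are run at speed `g i` and `m i * g i ^ (p + 1)` is the same for all tasks
(the Lagrange condition), then summing the tangent inequalities leaves only the change in total
time, multiplied by a nonpositive constant. Solving the Lagrange condition together with the time
constraint gives `g i` proportional to `m i ^ (-1 / (p + 1))`; for `p = 2` and `m = (2, 1)` the
speed ratio is `2 ^ (-1 / 3)`.
-/

open Finset

theorem rpow_sub_mul_inv_sub_inv_le_rpow {p f g : ℝ} (hp : 0 ≤ p) (hf : 0 < f) (hg : 0 < g) :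
    g ^ p - p * g ^ (p + 1) * (f⁻¹ - g⁻¹) ≤ f ^ p := by
  have bernoulli : 1 + (p + 1) * (f / g - 1) ≤ (f / g) ^ (p + 1) := by
    have hfg : 0 < f / g := div_pos hf hg
    simpa using one_add_mul_self_le_rpow_one_add (s := f / g - 1) (by linarith)
      (le_add_of_nonneg_left hp)
  rw [Real.div_rpow hf.le hg.le, Real.rpow_add_one hf.ne', Real.rpow_add_one hg.ne'] at bernoulli
  calc
    g ^ p - p * g ^ (p + 1) * (f⁻¹ - g⁻¹)
        = (1 + (p + 1) * (f / g - 1)) * (g ^ p * g / f) := by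
      rw [Real.rpow_add_one hg.ne']
      field_simp
      ring
    _ ≤ f ^ p * f / (g ^ p * g) * (g ^ p * g / f) := by gcongr
    _ = f ^ p := by field_simp

section Tasks

variable {ι : Type*} {s : Finset ι} {m w f g : ι → ℝ} {p c T : ℝ} {i : ι}

theorem sum_mul_rpow_le_of_mul_rpow_eq_of_sum_div_le (hp : 0 ≤ p) (hc : 0 ≤ c)
    (hw : ∀ i ∈ s, 0 ≤ w i) (hf : ∀ i ∈ s, 0 < f i) (hg : ∀ i ∈ s, 0 < g i)
    (lagrange : ∀ i ∈ s, m i * g i ^ (p + 1) = c)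
    (time : ∑ i ∈ s, w i / f i ≤ ∑ i ∈ s, w i / g i) :
    ∑ i ∈ s, m i * w i * g i ^ p ≤ ∑ i ∈ s, m i * w i * f i ^ p := by
  have hm : ∀ i ∈ s, 0 ≤ m i := fun i hi ↦
    nonneg_of_mul_nonneg_left (hc.trans_eq (lagrange i hi).symm) (Real.rpow_pos_of_pos (hg i hi) _)
  calc
    ∑ i ∈ s, m i * w i * g i ^ p
        ≤ ∑ i ∈ s, m i * w i * g i ^ p - p * c * (∑ i ∈ s, w i / f i - ∑ i ∈ s, w i / g i) :=
      le_sub_self_iff _ |>.2 <|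
        mul_nonpos_of_nonneg_of_nonpos (mul_nonneg hp hc) (sub_nonpos.2 time)
    _ = ∑ i ∈ s, m i * w i * (g i ^ p - p * g i ^ (p + 1) * ((f i)⁻¹ - (g i)⁻¹)) := by
      rw [← sum_sub_distrib, mul_sum, ← sum_sub_distrib]
      refine sum_congr rfl fun i hi ↦ ?_
      rw [← lagrange i hi]
      ring
    _ ≤ ∑ i ∈ s, m i * w i * f i ^ p := by
      refine sum_le_sum fun i hi ↦ mul_le_mul_of_nonneg_left ?_ (mul_nonneg (hm i hi) (hw i hi))
      exact rpow_sub_mul_inv_sub_inv_le_rpow hp (hf i hi) (hg i hi)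

/-- The speed at which an optimal schedule runs a task executed once, when task `i` has weight
`w i` and is executed `m i` times, one execution at speed `f` costs energy `w i * f ^ p`, and the
time budget is `T`. Only one of the `m i` executions of a task is charged to the budget. -/
noncomputable def singleExecutionSpeed (s : Finset ι) (m w : ι → ℝ) (p T : ℝ) : ℝ :=
  (∑ i ∈ s, m i ^ (1 / (p + 1)) * w i) / T

/-- The optimal speed of task `i`, in the model of `singleExecutionSpeed`. -/
noncomputable def optimalSpeed (s : Finset ι) (m w : ι → ℝ) (p T : ℝ) (i : ι) : ℝ :=
  m i ^ (-1 / (p + 1)) * singleExecutionSpeed s m w p T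

theorem singleExecutionSpeed_pos (hs : s.Nonempty) (hm : ∀ i ∈ s, 0 < m i)
    (hw : ∀ i ∈ s, 0 < w i) (hT : 0 < T) : 0 < singleExecutionSpeed s m w p T :=
  div_pos (sum_pos (fun i hi ↦ mul_pos (Real.rpow_pos_of_pos (hm i hi) _) (hw i hi)) hs) hT

theorem mul_optimalSpeed_rpow (hp : p + 1 ≠ 0) (hm : 0 < m i)
    (h : 0 ≤ singleExecutionSpeed s m w p T) :
    m i * optimalSpeed s m w p T i ^ (p + 1) = singleExecutionSpeed s m w p T ^ (p + 1) := by
  rw [optimalSpeed, Real.mul_rpow (by positivity) h, ← Real.rpow_mul hm.le, div_mul_cancel₀ _ hp,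
    Real.rpow_neg_one, mul_inv_cancel_left₀ hm.ne']

theorem sum_div_optimalSpeed (hm : ∀ i ∈ s, 0 ≤ m i) (h : singleExecutionSpeed s m w p T ≠ 0) :
    ∑ i ∈ s, w i / optimalSpeed s m w p T i = T := by
  have term : ∀ i ∈ s, w i / optimalSpeed s m w p T i =
      m i ^ (1 / (p + 1)) * w i / singleExecutionSpeed s m w p T := fun i hi ↦ by
    rw [optimalSpeed, neg_div, Real.rpow_neg (hm i hi), div_mul_eq_div_div, div_inv_eq_mul,
      mul_comm (w i)]
  rw [sum_congr rfl term, ← sum_div]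
  exact div_div_cancel₀ (div_ne_zero_iff.1 h).1

theorem min_energy_speed_ratio_general (hs : s.Nonempty) (hm : ∀ i ∈ s, 0 < m i)
    (hw : ∀ i ∈ s, 0 < w i) (hp : 0 ≤ p) (hT : 0 < T) :
    ∑ i ∈ s, w i / optimalSpeed s m w p T i = T ∧
    ∀ f : ι → ℝ, (∀ i ∈ s, 0 < f i) → ∑ i ∈ s, w i / f i ≤ T →
      ∑ i ∈ s, m i * w i * optimalSpeed s m w p T i ^ p ≤ ∑ i ∈ s, m i * w i * f i ^ p := by
  have single_pos : 0 < singleExecutionSpeed s m w p T := singleExecutionSpeed_pos hs hm hw hT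
  have time : ∑ i ∈ s, w i / optimalSpeed s m w p T i = T :=
    sum_div_optimalSpeed (fun i hi ↦ (hm i hi).le) single_pos.ne'
  refine ⟨time, fun f hf hfT ↦ ?_⟩
  exact sum_mul_rpow_le_of_mul_rpow_eq_of_sum_div_le hp (Real.rpow_nonneg single_pos.le (p + 1))
    (fun i hi ↦ (hw i hi).le) hf
    (fun i hi ↦ mul_pos (Real.rpow_pos_of_pos (hm i hi) _) single_pos)
    (fun i hi ↦ mul_optimalSpeed_rpow (by positivity) (hm i hi) single_pos.le)
    (hfT.trans_eq time.symm)

end Tasks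

/-- The minimum of `2 w1 f1^2 + w2 f2^2` subject to `w1/f1 + w2/f2 = T`
is attained when `f1 = 2^(-1/3) f2`. -/
theorem min_energy_speed_ratio
    (w1 w2 T : ℝ) (hw1 : 0 < w1) (hw2 : 0 < w2) (hT : 0 < T)
    (g1 g2 : ℝ)
    (hg2 : g2 = ((2 : ℝ) ^ ((1 : ℝ) / 3) * w1 + w2) / T)
    (hg1 : g1 = (2 : ℝ) ^ (-(1 : ℝ) / 3) * g2) :
    w1 / g1 + w2 / g2 = T ∧
    ∀ f1 f2 : ℝ, 0 < f1 → 0 < f2 → w1 / f1 + w2 / f2 = T →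
      2 * w1 * g1 ^ 2 + w2 * g2 ^ 2 ≤ 2 * w1 * f1 ^ 2 + w2 * f2 ^ 2 := by
  have hsingle : singleExecutionSpeed univ ![2, 1] ![w1, w2] 2 T = g2 := by
    norm_num [singleExecutionSpeed, hg2]
  have hopt : optimalSpeed univ ![2, 1] ![w1, w2] 2 T = ![g1, g2] := by
    ext i
    fin_cases i <;> norm_num [optimalSpeed, hsingle, hg1]
  obtain ⟨time, energy⟩ := min_energy_speed_ratio_general (m := ![2, 1]) (w := ![w1, w2])
    (p := 2) univ_nonempty (by simp) (by simp [hw1, hw2]) zero_le_two hT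
  simp only [hopt, Fin.sum_univ_two, Matrix.cons_val_zero, Matrix.cons_val_one, Real.rpow_two,
    one_mul] at time energy
  exact ⟨time, fun f1 f2 hf1 hf2 hf ↦ energy ![f1, f2] (by simp [hf1, hf2]) hf.le⟩
end

section
/- Let $c = 4 \sqrt{2/7} \cdot \cos\!\left( \tfrac{1}{3} \left( \pi - \arctan(1/\sqrt{7}) \right) \right) - 1$. Then $c$ is the unique positive real root of the polynomial $7X^3 + 21X^2 - 3X - 1 = 0$, and $0.283 < c < 0.284$. Consequently, for every $a > 0$, $X = c \cdot a$ is the unique positive real root of $7X^3 + 21 a X^2 - 3 a^2 X - a^3 = 0$. -/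
/-!
Substituting `X = Y - 1` turns `X³ + 3X² - 3x²X - x²` into the depressed cubic
`Y³ - 3(1 + x²)Y + 2(1 + x²)`. By the triple-angle formula `Y = 2s cos θ`, with `s = √(1 + x²)`,
is a root as soon as `s cos 3θ = -1`; since `cos (arctan x) = 1 / s`, the angle
`θ = (π - arctan x) / 3` will do. The constant `c` is the case `x = 1 / √7`.

The coefficients of the cubic change sign only once: divided by `X²`, it is strictly increasing on
the positive half-line, which gives both the uniqueness of the root and its numerical bounds.
-/

open Real Set

section CubicWithOneSignChange

variable {K : Type*} [Field K] [LinearOrder K] [IsStrictOrderedRing K] {p q r t x y : K}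

theorem strictMonoOn_cubic_div_sq (hp : 0 ≤ p) (hr : 0 ≤ r) (ht : 0 < t) :
    StrictMonoOn (fun x : K ↦ (p * x ^ 3 + q * x ^ 2 - r * x - t) / x ^ 2) (Ioi 0) := by
  intro x hx y hy hxy
  rw [mem_Ioi] at hx hy
  have hfactor : (p * y ^ 3 + q * y ^ 2 - r * y - t) * x ^ 2
      - (p * x ^ 3 + q * x ^ 2 - r * x - t) * y ^ 2
      = (y - x) * (p * (x * y) ^ 2 + r * (x * y) + t * (x + y)) := by ring
  rw [div_lt_div_iff₀ (by positivity) (by positivity), ← sub_pos, hfactor]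
  exact mul_pos (sub_pos.2 hxy) (by positivity)

theorem eq_of_cubic_eq_zero (hp : 0 ≤ p) (hr : 0 ≤ r) (ht : 0 < t) (hx : 0 < x) (hy : 0 < y)
    (hx_root : p * x ^ 3 + q * x ^ 2 - r * x - t = 0)
    (hy_root : p * y ^ 3 + q * y ^ 2 - r * y - t = 0) : x = y :=
  (strictMonoOn_cubic_div_sq (q := q) hp hr ht).injOn hx hy (by
    simp only [hx_root, hy_root, zero_div])

theorem lt_of_cubic_neg (hp : 0 ≤ p) (hr : 0 ≤ r) (ht : 0 < t) (hx : 0 < x) (hy : 0 < y)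
    (hx_neg : p * x ^ 3 + q * x ^ 2 - r * x - t < 0)
    (hy_root : p * y ^ 3 + q * y ^ 2 - r * y - t = 0) : x < y :=
  ((strictMonoOn_cubic_div_sq (q := q) hp hr ht).lt_iff_lt hx hy).1 (by
    simpa only [hy_root, zero_div] using div_neg_of_neg_of_pos hx_neg (by positivity))

theorem lt_of_cubic_pos (hp : 0 ≤ p) (hr : 0 ≤ r) (ht : 0 < t) (hx : 0 < x) (hy : 0 < y)
    (hx_root : p * x ^ 3 + q * x ^ 2 - r * x - t = 0)
    (hy_pos : 0 < p * y ^ 3 + q * y ^ 2 - r * y - t) : x < y :=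
  ((strictMonoOn_cubic_div_sq (q := q) hp hr ht).lt_iff_lt hx hy).1 (by
    simpa only [hx_root, zero_div] using div_pos hy_pos (by positivity))

end CubicWithOneSignChange

theorem depressed_cubic_two_mul_cos (s θ : ℝ) :
    (2 * s * cos θ) ^ 3 - 3 * s ^ 2 * (2 * s * cos θ) = 2 * s ^ 3 * cos (3 * θ) := by
  rw [cos_three_mul]
  ring

/-- Viète's trigonometric root of the cubic `X³ + 3X² - 3x²X - x²`, whose value at `x = 1 / √7` is
the constant `c`. -/
noncomputable def trigRoot (x : ℝ) : ℝ :=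
  2 * √(1 + x ^ 2) * cos ((π - arctan x) / 3) - 1

theorem cubic_trigRoot (x : ℝ) :
    trigRoot x ^ 3 + 3 * trigRoot x ^ 2 - 3 * x ^ 2 * trigRoot x - x ^ 2 = 0 := by
  have hs_sq : √(1 + x ^ 2) ^ 2 = 1 + x ^ 2 := sq_sqrt (by positivity)
  have hcos : √(1 + x ^ 2) * cos (3 * ((π - arctan x) / 3)) = -1 := by
    rw [mul_div_cancel₀ _ three_ne_zero, cos_pi_sub, cos_arctan, mul_neg,
      mul_one_div_cancel (by positivity)]
  have hdepressed := depressed_cubic_two_mul_cos √(1 + x ^ 2) ((π - arctan x) / 3)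
  have hY : 2 * √(1 + x ^ 2) * cos ((π - arctan x) / 3) = trigRoot x + 1 := by
    rw [trigRoot, sub_add_cancel]
  rw [hY, hs_sq] at hdepressed
  linear_combination hdepressed + 2 * √(1 + x ^ 2) ^ 2 * hcos - 2 * hs_sq

theorem half_lt_cos_of_lt_pi_div_three {θ : ℝ} (hθ₀ : 0 ≤ θ) (hθ : θ < π / 3) :
    1 / 2 < cos θ := by
  rw [← cos_pi_div_three]
  exact cos_lt_cos_of_nonneg_of_le_pi_div_two hθ₀ (by linarith [pi_pos]) hθ

theorem trigRoot_pos {x : ℝ} (hx : 0 < x) : 0 < trigRoot x := by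
  have harctan_pos : 0 < arctan x := arctan_pos.2 hx
  have hcos : 1 / 2 < cos ((π - arctan x) / 3) :=
    half_lt_cos_of_lt_pi_div_three (by linarith [arctan_lt_pi_div_two x, pi_pos]) (by linarith)
  have hsqrt : 1 < √(1 + x ^ 2) := lt_sqrt_of_sq_lt (by nlinarith)
  rw [trigRoot, sub_pos]
  calc
    1 < √(1 + x ^ 2) := hsqrt
    _ = 2 * √(1 + x ^ 2) * (1 / 2) := by ring
    _ < 2 * √(1 + x ^ 2) * cos ((π - arctan x) / 3) := by gcongr

theorem one_div_sqrt_sq {y : ℝ} (hy : 0 ≤ y) : (1 / √y) ^ 2 = 1 / y := by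
  rw [div_pow, sq_sqrt hy, one_pow]

theorem trigRoot_one_div_sqrt_seven :
    trigRoot (1 / √7) = 4 * √(2 / 7) * cos ((π - arctan (1 / √7)) / 3) - 1 := by
  have hsqrt : √(1 + (1 / √7) ^ 2) = 2 * √(2 / 7) := by
    rw [one_div_sqrt_sq (by norm_num), sqrt_eq_iff_mul_self_eq (by norm_num) (by positivity),
      mul_mul_mul_comm, mul_self_sqrt (by norm_num)]
    norm_num
  rw [trigRoot, hsqrt]
  ring

/-- `c = 4 √(2/7) cos((π - arctan(1/√7))/3) - 1` is the unique positive root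
of `7X³ + 21X² - 3X - 1`, lies in `(0.283, 0.284)`, and for every `a > 0`,
`X = c a` is the unique positive root of `7X³ + 21aX² - 3a²X - a³`. -/
theorem constant_c_root
    (c : ℝ)
    (hc : c = 4 * Real.sqrt (2 / 7) *
        Real.cos ((Real.pi - Real.arctan (1 / Real.sqrt 7)) / 3) - 1) :
    (0 < c ∧ 7 * c ^ 3 + 21 * c ^ 2 - 3 * c - 1 = 0 ∧
      ∀ x : ℝ, 0 < x → 7 * x ^ 3 + 21 * x ^ 2 - 3 * x - 1 = 0 → x = c) ∧
    (0.283 < c ∧ c < 0.284) ∧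
    (∀ a : ℝ, 0 < a →
      0 < c * a ∧
      7 * (c * a) ^ 3 + 21 * a * (c * a) ^ 2 - 3 * a ^ 2 * (c * a) - a ^ 3 = 0 ∧
      ∀ x : ℝ, 0 < x → 7 * x ^ 3 + 21 * a * x ^ 2 - 3 * a ^ 2 * x - a ^ 3 = 0 →
        x = c * a) := by
  rw [← trigRoot_one_div_sqrt_seven] at hc
  have hc_pos : 0 < c := hc ▸ trigRoot_pos (by positivity)
  have hc_root : 7 * c ^ 3 + 21 * c ^ 2 - 3 * c - 1 = 0 := by
    have hroot := cubic_trigRoot (1 / √7)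
    rw [← hc, one_div_sqrt_sq (by norm_num)] at hroot
    linear_combination 7 * hroot
  refine ⟨⟨hc_pos, hc_root, fun x hx hx_root ↦ ?_⟩, ⟨?_, ?_⟩, fun a ha ↦ ?_⟩
  · exact eq_of_cubic_eq_zero (by norm_num) (by norm_num) one_pos hx hc_pos hx_root hc_root
  · exact lt_of_cubic_neg (by norm_num) (by norm_num) one_pos (by norm_num) hc_pos
      (by norm_num) hc_root
  · exact lt_of_cubic_pos (by norm_num) (by norm_num) one_pos hc_pos (by norm_num) hc_root
      (by norm_num)
  · have hca_pos : 0 < c * a := mul_pos hc_pos ha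
    have hca_root :
        7 * (c * a) ^ 3 + 21 * a * (c * a) ^ 2 - 3 * a ^ 2 * (c * a) - a ^ 3 = 0 := by
      linear_combination a ^ 3 * hc_root
    exact ⟨hca_pos, hca_root, fun x hx hx_root ↦
      eq_of_cubic_eq_zero (by norm_num) (by positivity) (by positivity) hx hca_pos hx_root hca_root⟩
end

section
/- Let $f_{rel} > 0$, $S > 0$, $D > 0$ with $D f_{rel} > S$, and define $E_1(X) = (S - X) f_{rel}^2 + 2X \left( \frac{2X}{D f_{rel} - S + X} f_{rel} \right)^2$ for $X \geq 0$. Let $c$ be the unique positive root of $7t^3 + 21t^2 - 3t - 1 = 0$. Then $E_1$ attains its global minimum over $[0, \infty)$ at $X^* = c \,(D f_{rel} - S)$, and at this minimizer the re-execution speed equals $\frac{2X^*}{D f_{rel} - S + X^*} f_{rel} = \frac{2c}{1+c} f_{rel}$. -/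
/-!
Measured in units of the slack `a = D f_rel - S`, the re-executed weight `X = t a` costs
`f_rel² (S + a g(t))` with `g(t) = 8 t³ / (1 + t)² - t`. The function `t³ / (1 + t)²` lies above
each of its tangent lines on `[0, ∞)`, and `7c³ + 21c² - 3c - 1 = 0` says precisely that eight
times its slope at `c`, which is `8 c² (c + 3) / (1 + c)³`, equals `1`. So the tangent line of `g`
at `c` is horizontal and lies below `g`.
-/

/-- The part of the energy of a chain that depends on the re-executed weight, as a function of that
weight divided by the slack `D f_rel - S`, in units of `f_rel²` times the slack. -/
noncomputable def normalizedEnergy (t : ℝ) : ℝ :=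
  8 * (t ^ 3 / (1 + t) ^ 2) - t

theorem cube_div_one_add_sq_tangent_le {c t : ℝ} (hc : 0 ≤ c) (ht : 0 ≤ t) :
    c ^ 3 / (1 + c) ^ 2 + c ^ 2 * (c + 3) / (1 + c) ^ 3 * (t - c) ≤ t ^ 3 / (1 + t) ^ 2 := by
  have gap_eq : t ^ 3 / (1 + t) ^ 2
      - (c ^ 3 / (1 + c) ^ 2 + c ^ 2 * (c + 3) / (1 + c) ^ 3 * (t - c))
      = (t - c) ^ 2 * (3 * t * c + t + 2 * c) / ((1 + t) ^ 2 * (1 + c) ^ 3) := by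
    field_simp
    ring
  rw [← sub_nonneg, gap_eq]
  positivity

theorem isMinOn_normalizedEnergy {c : ℝ} (hc : 0 ≤ c)
    (hroot : 7 * c ^ 3 + 21 * c ^ 2 - 3 * c - 1 = 0) :
    IsMinOn normalizedEnergy (Set.Ici 0) c := by
  have slope_eq : c ^ 2 * (c + 3) / (1 + c) ^ 3 = 1 / 8 := by
    rw [div_eq_div_iff (by positivity) (by norm_num)]
    linear_combination hroot
  refine isMinOn_iff.mpr fun t ht => ?_
  have tangent_le := cube_div_one_add_sq_tangent_le hc ht
  rw [slope_eq] at tangent_le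
  unfold normalizedEnergy
  linarith

theorem two_mul_mul_div_add_mul {a : ℝ} (ha : a ≠ 0) (t : ℝ) :
    2 * (t * a) / (a + t * a) = 2 * t / (1 + t) := by
  rw [← mul_assoc, ← one_add_mul, mul_div_mul_right _ _ ha]

theorem energy_eq_normalizedEnergy {a : ℝ} (ha : a ≠ 0) (S f t : ℝ) :
    (S - t * a) * f ^ 2 + 2 * (t * a) * (2 * (t * a) / (a + t * a) * f) ^ 2 =
      f ^ 2 * (S + a * normalizedEnergy t) := by
  rw [two_mul_mul_div_add_mul ha, mul_pow, div_pow, normalizedEnergy]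
  ring

/-- On one processor, the energy `E1(X)` of a chain with re-executed weight `X`
attains its global minimum over `[0,∞)` at `X* = c (D f_rel - S)`, where `c` is
the unique positive root of `7t³+21t²-3t-1`, and there the re-execution speed
equals `2c/(1+c) f_rel`. -/
theorem E1_global_min
    (frel S D c : ℝ) (hfrel : 0 < frel) (hS : 0 < S) (hD : 0 < D)
    (hDS : S < D * frel)
    (hc : 0 < c) (hcroot : 7 * c ^ 3 + 21 * c ^ 2 - 3 * c - 1 = 0)
    (hcuniq : ∀ t : ℝ, 0 < t → 7 * t ^ 3 + 21 * t ^ 2 - 3 * t - 1 = 0 → t = c)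
    (E1 : ℝ → ℝ)
    (hE1 : ∀ X, E1 X =
      (S - X) * frel ^ 2 + 2 * X * (2 * X / (D * frel - S + X) * frel) ^ 2) :
    (∀ X : ℝ, 0 ≤ X → E1 (c * (D * frel - S)) ≤ E1 X) ∧
    2 * (c * (D * frel - S)) / (D * frel - S + c * (D * frel - S)) * frel =
      2 * c / (1 + c) * frel := by
  have slack_pos : 0 < D * frel - S := sub_pos.mpr hDS
  set a := D * frel - S
  refine ⟨fun X hX => ?_, by rw [two_mul_mul_div_add_mul slack_pos.ne']⟩
  obtain ⟨t, rfl⟩ : ∃ t, X = t * a := ⟨X / a, (div_mul_cancel₀ X slack_pos.ne').symm⟩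
  have ht : 0 ≤ t := nonneg_of_mul_nonneg_left hX slack_pos
  rw [hE1, hE1, energy_eq_normalizedEnergy slack_pos.ne', energy_eq_normalizedEnergy slack_pos.ne']
  gcongr
  exact isMinOn_iff.mp (isMinOn_normalizedEnergy hc.le hcroot) t ht
end

section
/- Let $f_{rel} > 0$, $S > 0$, $D > 0$ with $D f_{rel} > S$, and define $E_2(X) = (S - X) f_{rel}^2 + 2X \left( \frac{X}{D f_{rel} - S + X} f_{rel} \right)^2$ for $X \geq 0$. Then $E_2$ attains its global minimum over $[0, \infty)$ at $X^* = D f_{rel} - S$, and at this minimizer the replication speed equals $\frac{X^*}{D f_{rel} - S + X^*} f_{rel} = \frac{1}{2} f_{rel}$. -/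
section Field

variable {K : Type*} [Field K]

/-- The common speed at which replicated tasks of total weight `X` exactly meet the deadline, when
the other tasks run at speed `f`. The deadline `D` and the total weight `S` enter only through the
slack `c = D * f - S`. -/
def replicationSpeed (c f X : K) : K := X / (c + X) * f

/-- The energy of a chain of total weight `S` in which tasks of total weight `X` are executed twice
at `replicationSpeed c f X` and the others once at speed `f`; again `c = D * f - S`. -/
def replicationEnergy (S c f X : K) : K := (S - X) * f ^ 2 + 2 * X * replicationSpeed c f X ^ 2

variable {c : K}

theorem replicationSpeed_self (hc : c ≠ 0) (f : K) : replicationSpeed c f c = 1 / 2 * f := by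
  rw [replicationSpeed, ← two_mul, div_mul_cancel_right₀ hc, one_div]

-- The double root at `c` is the stationary point; the simple root limits where `c` is optimal.
theorem replicationEnergy_sub_replicationEnergy_self [NeZero (2 : K)] (hc : c ≠ 0) {X : K}
    (hcX : c + X ≠ 0) (S f : K) :
    replicationEnergy S c f X - replicationEnergy S c f c =
      f ^ 2 * (X - c) ^ 2 * (X + c / 2) / (c + X) ^ 2 := by
  have h2 : (2 : K) ≠ 0 := two_ne_zero
  rw [replicationEnergy, replicationEnergy, replicationSpeed_self hc, replicationSpeed]
  field_simp
  ring

end Field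

section OrderedField

variable {K : Type*} [Field K] [LinearOrder K] [IsStrictOrderedRing K]

theorem isMinOn_replicationEnergy {c : K} (hc : 0 < c) (S f : K) :
    IsMinOn (replicationEnergy S c f) (Set.Ici (-(c / 2))) c := by
  rw [isMinOn_iff]
  intro X hX
  have hX' : 0 ≤ X + c / 2 := neg_le_iff_add_nonneg.mp hX
  have hcX : 0 < c + X := by linarith
  rw [← sub_nonneg, replicationEnergy_sub_replicationEnergy_self hc.ne' hcX.ne']
  positivity

theorem E2_global_min_general (frel S D : K) (hDS : S < D * frel) (E2 : K → K)
    (hE2 : ∀ X, E2 X = (S - X) * frel ^ 2 + 2 * X * (X / (D * frel - S + X) * frel) ^ 2) :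
    (∀ X : K, -((D * frel - S) / 2) ≤ X → E2 (D * frel - S) ≤ E2 X) ∧
    (D * frel - S) / (D * frel - S + (D * frel - S)) * frel = 1 / 2 * frel := by
  have hslack : 0 < D * frel - S := sub_pos.mpr hDS
  obtain rfl : E2 = replicationEnergy S (D * frel - S) frel := funext hE2
  exact ⟨isMinOn_iff.mp (isMinOn_replicationEnergy hslack S frel),
    replicationSpeed_self hslack.ne' frel⟩

end OrderedField

/-- On at least two processors, the energy `E2(X)` of a chain with replicated
weight `X` attains its global minimum over `[0,∞)` at `X* = D f_rel - S`, and
there the replication speed equals `f_rel / 2`. -/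
theorem E2_global_min
    (frel S D : ℝ) (hfrel : 0 < frel) (hS : 0 < S) (hD : 0 < D)
    (hDS : S < D * frel)
    (E2 : ℝ → ℝ)
    (hE2 : ∀ X, E2 X =
      (S - X) * frel ^ 2 + 2 * X * (X / (D * frel - S + X) * frel) ^ 2) :
    (∀ X : ℝ, 0 ≤ X → E2 (D * frel - S) ≤ E2 X) ∧
    (D * frel - S) / (D * frel - S + (D * frel - S)) * frel = 1 / 2 * frel :=
  (E2_global_min_general frel S D hDS E2 hE2).imp_left fun hmin X hX => hmin X (by linarith)
end

section
/- Let $f_{rel} > 0$, $S > 0$, $D > 0$ with $D f_{rel} > S$, and define $E_2(X) = (S - X) f_{rel}^2 + 2X \left( \frac{X}{D f_{rel} - S + X} f_{rel} \right)^2$ for $X \geq 0$. Then $E_2$ is monotonically non-increasing on the interval $[0, \; D f_{rel} - S]$ and monotonically non-decreasing on the interval $[D f_{rel} - S, \; \infty)$. Consequently, over any set of attainable values of $X$, $E_2$ is minimized either at the largest attainable value not exceeding $D f_{rel} - S$ or at the smallest attainable value exceeding $D f_{rel} - S$. -/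
/-!
With `c = D f_rel - S`, the derivative of the energy factors as
`E₂'(X) = f_rel² (X² + 4cX + c²) / (c + X)³ · (X - c)`,
so it has the sign of `X - c` for all `X ≥ 0`.
-/

open Set

/-- The energy `E₂(X)` of a chain of total weight `S` whose replicated tasks have total weight `X`,
with reliability speed `f`: replicated tasks run twice at speed `X / (c + X) * f`. The deadline `D`
enters only through the slack `c = D * f - S`, the extra work that fits before `D` at speed `f`. -/
noncomputable def chainEnergy (f S c X : ℝ) : ℝ :=
  (S - X) * f ^ 2 + 2 * X * (X / (c + X) * f) ^ 2

theorem hasDerivAt_div_const_add {𝕜 : Type*} [NontriviallyNormedField 𝕜] {c x : 𝕜}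
    (hx : c + x ≠ 0) : HasDerivAt (fun y ↦ y / (c + y)) (c / (c + x) ^ 2) x :=
  ((hasDerivAt_id' x).fun_div ((hasDerivAt_id' x).const_add c) hx).congr_deriv (by ring)

section chainEnergy

variable (f S : ℝ) {c X : ℝ}

theorem hasDerivAt_chainEnergy (hX : c + X ≠ 0) :
    HasDerivAt (chainEnergy f S c)
      (f ^ 2 * (X ^ 2 + 4 * c * X + c ^ 2) / (c + X) ^ 3 * (X - c)) X := by
  have hspeed : HasDerivAt (fun x ↦ x / (c + x) * f) (c / (c + X) ^ 2 * f) X :=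
    (hasDerivAt_div_const_add hX).mul_const f
  have hsingle : HasDerivAt (fun x ↦ (S - x) * f ^ 2) (-1 * f ^ 2) X :=
    ((hasDerivAt_id' X).const_sub S).mul_const (f ^ 2)
  have hreplicated : HasDerivAt (fun x ↦ 2 * x * (x / (c + x) * f) ^ 2)
      (2 * (X / (c + X) * f) ^ 2 +
        2 * X * (2 * (X / (c + X) * f) * (c / (c + X) ^ 2 * f))) X := by
    simpa using ((hasDerivAt_id' X).const_mul 2).fun_mul (hspeed.fun_pow 2)
  refine (hsingle.fun_add hreplicated).congr_deriv ?_
  field_simp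
  ring

theorem continuousOn_chainEnergy (hc : 0 < c) : ContinuousOn (chainEnergy f S c) (Ici 0) :=
  fun _ hX ↦ (hasDerivAt_chainEnergy f S
    (add_pos_of_pos_of_nonneg hc hX).ne').continuousAt.continuousWithinAt

theorem antitoneOn_chainEnergy (hc : 0 < c) : AntitoneOn (chainEnergy f S c) (Icc 0 c) := by
  refine antitoneOn_of_hasDerivWithinAt_nonpos (convex_Icc 0 c)
    ((continuousOn_chainEnergy f S hc).mono Icc_subset_Ici_self)
    (fun X hX ↦ (hasDerivAt_chainEnergy f S ?_).hasDerivWithinAt) (fun X hX ↦ ?_)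
  · have hX₀ : 0 ≤ X := (interior_subset hX).1
    positivity
  · obtain ⟨hX₀, hXc⟩ := interior_subset hX
    exact mul_nonpos_of_nonneg_of_nonpos (by positivity) (sub_nonpos.2 hXc)

theorem monotoneOn_chainEnergy (hc : 0 < c) : MonotoneOn (chainEnergy f S c) (Ici c) := by
  refine monotoneOn_of_hasDerivWithinAt_nonneg (convex_Ici c)
    ((continuousOn_chainEnergy f S hc).mono (Ici_subset_Ici.2 hc.le))
    (fun X hX ↦ (hasDerivAt_chainEnergy f S ?_).hasDerivWithinAt) (fun X hX ↦ ?_)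
  · have hX₀ : 0 < X := hc.trans_le (interior_subset hX)
    positivity
  · have hcX : c ≤ X := interior_subset hX
    have hX₀ : 0 < X := hc.trans_le hcX
    exact mul_nonneg (by positivity) (sub_nonneg.2 hcX)

end chainEnergy

/-- `E2` is non-increasing on `[0, D f_rel - S]` and non-decreasing on
`[D f_rel - S, ∞)`. -/
theorem E2_unimodal
    (frel S D : ℝ) (hfrel : 0 < frel) (hS : 0 < S) (hD : 0 < D)
    (hDS : S < D * frel)
    (E2 : ℝ → ℝ)
    (hE2 : ∀ X, E2 X =
      (S - X) * frel ^ 2 + 2 * X * (X / (D * frel - S + X) * frel) ^ 2) :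
    (∀ X1 X2 : ℝ, 0 ≤ X1 → X1 ≤ X2 → X2 ≤ D * frel - S → E2 X2 ≤ E2 X1) ∧
    (∀ X1 X2 : ℝ, D * frel - S ≤ X1 → X1 ≤ X2 → E2 X1 ≤ E2 X2) := by
  obtain rfl : E2 = chainEnergy frel S (D * frel - S) := funext hE2
  have hslack : 0 < D * frel - S := sub_pos.2 hDS
  constructor
  · intro X1 X2 h0 h12 hslack_ge
    exact antitoneOn_chainEnergy frel S hslack
      ⟨h0, h12.trans hslack_ge⟩ ⟨h0.trans h12, hslack_ge⟩ h12
  · intro X1 X2 hslack_le h12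
    exact monotoneOn_chainEnergy frel S hslack hslack_le (hslack_le.trans h12) h12
end

section
/- Let $f_{rel} > 0$, $S > 0$, $D > 0$ with $D f_{rel} \geq 2S$, and define $E_2(X) = (S - X) f_{rel}^2 + 2X \left( \frac{X}{D f_{rel} - S + X} f_{rel} \right)^2$ for $X \in [0, S]$. Then $E_2$ attains its minimum over $[0, S]$ at $X = S$. That is, when the deadline satisfies $D \geq 2S/f_{rel}$, replicating all tasks is optimal for a linear chain on at least two processors. -/
/-!
Let `c = D f_rel - S` be the work that fits into the time left over when the whole chain runs at
speed `f_rel`. Up to an affine rescaling, `E₂` is `X ↦ 2X (X / (c + X))² - X`, whose derivative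
`(X - c) (X² + 4cX + c²) / (c + X)³` is nonpositive on `[0, c]`. The assumption `2S ≤ D f_rel` says
exactly that `S ≤ c`, so `E₂` decreases on all of `[0, S]`.
-/

open Set

/-- The change in energy, in units of `f_rel²`, when tasks of total weight `x` are replicated
instead of run once at the reliability speed. Here `c = D f_rel - S` is the slack of the deadline;
the replicated tasks share the remaining time `(c + x) / f_rel`, so both copies run at the
fraction `x / (c + x)` of `f_rel`. -/
def replicationExcess {𝕜 : Type*} [Field 𝕜] (c x : 𝕜) : 𝕜 :=
  2 * x * (x / (c + x)) ^ 2 - x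

theorem hasDerivAt_replicationExcess {𝕜 : Type*} [NontriviallyNormedField 𝕜] {c x : 𝕜}
    (hcx : c + x ≠ 0) :
    HasDerivAt (replicationExcess c)
      ((x - c) * (x ^ 2 + 4 * c * x + c ^ 2) / (c + x) ^ 3) x := by
  have speed_deriv : HasDerivAt (fun y ↦ y / (c + y)) (c / (c + x) ^ 2) x :=
    ((hasDerivAt_id' x).fun_div ((hasDerivAt_id' x).const_add c) hcx).congr_deriv (by ring)
  refine ((((hasDerivAt_id' x).const_mul 2).fun_mul (speed_deriv.fun_pow 2)).fun_sub
    (hasDerivAt_id' x)).congr_deriv ?_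
  simp only [Nat.cast_ofNat, Nat.add_one_sub_one, pow_one]
  field_simp
  ring

theorem antitoneOn_replicationExcess {c : ℝ} (hc : 0 < c) :
    AntitoneOn (replicationExcess c) (Icc 0 c) := by
  have excess_deriv {x : ℝ} (hx : x ∈ Icc 0 c) :
      HasDerivAt (replicationExcess c) ((x - c) * (x ^ 2 + 4 * c * x + c ^ 2) / (c + x) ^ 3) x :=
    hasDerivAt_replicationExcess (add_pos_of_pos_of_nonneg hc hx.1).ne'
  refine antitoneOn_of_hasDerivWithinAt_nonpos (convex_Icc 0 c)
    (fun x hx ↦ (excess_deriv hx).continuousAt.continuousWithinAt)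
    (fun x hx ↦ (excess_deriv (interior_subset hx)).hasDerivWithinAt) fun x hx ↦ ?_
  obtain ⟨x_nonneg, x_le⟩ := interior_subset hx
  exact div_nonpos_of_nonpos_of_nonneg
    (mul_nonpos_of_nonpos_of_nonneg (sub_nonpos.2 x_le) (by positivity)) (by positivity)

/-- When `D f_rel ≥ 2S`, replicating all tasks is optimal: `E2` attains its
minimum over `[0, S]` at `X = S`. -/
theorem E2_min_at_S
    (frel S D : ℝ) (hfrel : 0 < frel) (hS : 0 < S) (hD : 0 < D)
    (hDS : 2 * S ≤ D * frel)
    (E2 : ℝ → ℝ)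
    (hE2 : ∀ X, E2 X =
      (S - X) * frel ^ 2 + 2 * X * (X / (D * frel - S + X) * frel) ^ 2) :
    ∀ X : ℝ, 0 ≤ X → X ≤ S → E2 S ≤ E2 X := by
  intro X hX hXS
  have energy_eq (Y : ℝ) : E2 Y = frel ^ 2 * (S + replicationExcess (D * frel - S) Y) := by
    rw [hE2, replicationExcess]
    ring
  have S_le_slack : S ≤ D * frel - S := by linarith
  have excess_le : replicationExcess (D * frel - S) S ≤ replicationExcess (D * frel - S) X :=
    antitoneOn_replicationExcess (hS.trans_le S_le_slack)
      ⟨hX, hXS.trans S_le_slack⟩ ⟨hS.le, S_le_slack⟩ hXS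
  rw [energy_eq, energy_eq]
  gcongr
end

section
/- Let $p \geq 1$ be an integer, let $C > 0$, let $w_1, \dots, w_n > 0$ with $S = \sum_{i=1}^n w_i$, and suppose that every weight satisfies $w_i < \max(S/p, \; C)$. Let $\beta = \max\!\left( 2 - \frac{3}{2p+1}, \; 2 - \frac{p+2}{4p+2} \right)$. Then there exists a partition of $\{1, \dots, n\}$ into $p$ (possibly empty) parts $P_1, \dots, P_p$ such that for every $q$, $\sum_{i \in P_q} w_i \leq \beta \cdot \max(S/p, \; C)$. -/
open Finset

/-!
Let `M` bound both every weight and the average load `S / p`. Place the weights in decreasing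
order, each on a least loaded of the `p` machines. If the next weight `x` meets an idle machine,
the new load is `x ≤ M`. Otherwise at least `p` weights, none smaller than `x`, are already
placed, so `(p + 1) x ≤ p M`. The least load is at most the average, hence at most `M - x / p`,
and the new load is at most `M + (1 - 1 / p) x ≤ 2 p / (p + 1) * M`.
This ratio is sharp: take `p + 1` weights equal to `p / (p + 1) * M`.
-/

section MachineLoad

variable {ι κ R : Type*} [DecidableEq κ] [AddCommMonoid R]

/-- The total weight that the assignment `a` of tasks to machines puts on the machine `q` when
only the tasks in `s` are counted. Letting `s` grow describes a schedule under construction, with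
`a` remaining a total function. -/
def machineLoad (w : ι → R) (s : Finset ι) (a : ι → κ) (q : κ) : R :=
  ∑ i ∈ s with a i = q, w i

theorem machineLoad_insert_update [DecidableEq ι] (w : ι → R) {s : Finset ι} {x : ι} (hx : x ∉ s)
    (a : ι → κ) (q : κ) :
    machineLoad w (insert x s) (Function.update a x q) =
      Function.update (machineLoad w s a) q (w x + machineLoad w s a q) := by
  have filter_update (r : κ) : {i ∈ s | Function.update a x q i = r} = {i ∈ s | a i = r} :=
    filter_congr fun i hi ↦ by rw [Function.update_of_ne (ne_of_mem_of_not_mem hi hx)]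
  funext r
  by_cases hr : r = q
  · subst hr
    simp [machineLoad, filter_insert, filter_update, hx]
  · simp [machineLoad, filter_insert, filter_update, hr, Ne.symm hr]

theorem exists_machineLoad_eq_zero_of_card_lt [Fintype κ] (w : ι → R) {s : Finset ι}
    (hs : #s < Fintype.card κ) (a : ι → κ) : ∃ q, machineLoad w s a q = 0 := by
  obtain ⟨q, -, hq⟩ : ∃ q ∈ univ, q ∉ s.image a :=
    exists_mem_notMem_of_card_lt_card (card_image_le.trans_lt hs)
  have idle : ∀ i ∈ s, a i ≠ q := fun i hi hiq ↦ hq (hiq ▸ mem_image_of_mem a hi)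
  exact ⟨q, by rw [machineLoad, filter_false_of_mem idle, sum_empty]⟩

end MachineLoad

section Greedy

variable {ι κ K : Type*} [Fintype κ] [DecidableEq κ] [Nonempty κ]
  [Field K] [LinearOrder K] [IsStrictOrderedRing K] {w : ι → K} {s : Finset ι} {x : ι} {M : K}

theorem exists_machineLoad_le_sum_div_card (w : ι → K) (s : Finset ι) (a : ι → κ) :
    ∃ q, machineLoad w s a q ≤ (∑ i ∈ s, w i) / Fintype.card κ := by
  have sum_le : ∑ i ∈ s, w i ≤ #(univ : Finset κ) • ((∑ i ∈ s, w i) / Fintype.card κ) := by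
    rw [nsmul_eq_mul, card_univ, mul_div_cancel₀ _ (Nat.cast_ne_zero.mpr Fintype.card_ne_zero)]
  simpa [machineLoad] using
    exists_sum_fiber_le_of_maps_to_of_sum_le_nsmul (fun i _ ↦ mem_univ (a i)) univ_nonempty sum_le

theorem exists_add_machineLoad_le (hx : 0 ≤ w x) (hxM : w x ≤ M) (hmin : ∀ i ∈ s, w x ≤ w i)
    (hsum : w x + ∑ i ∈ s, w i ≤ Fintype.card κ * M) (a : ι → κ) :
    ∃ q, w x + machineLoad w s a q ≤ 2 * Fintype.card κ / (Fintype.card κ + 1) * M := by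
  have one_le_card : (1 : K) ≤ Fintype.card κ := Nat.one_le_cast.mpr Fintype.card_pos
  rcases lt_or_ge #s (Fintype.card κ) with hs | hs
  · obtain ⟨q, idle⟩ := exists_machineLoad_eq_zero_of_card_lt w hs a
    have one_le_ratio : (1 : K) ≤ 2 * Fintype.card κ / (Fintype.card κ + 1) := by
      rw [one_le_div₀ (by positivity)]
      linarith
    refine ⟨q, ?_⟩
    rw [idle, add_zero]
    exact hxM.trans (le_mul_of_one_le_left (hx.trans hxM) one_le_ratio)
  · obtain ⟨q, hq⟩ := exists_machineLoad_le_sum_div_card w s a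
    set p : K := (Fintype.card κ : K)
    have card_mul_le : p * w x ≤ ∑ i ∈ s, w i := calc
      p * w x ≤ #s * w x := mul_le_mul_of_nonneg_right (Nat.cast_le.mpr hs) hx
      _ ≤ ∑ i ∈ s, w i := by simpa using card_nsmul_le_sum s w (w x) hmin
    have weight_le : w x ≤ p * M / (p + 1) := by
      rw [le_div_iff₀ (by positivity)]
      linarith
    refine ⟨q, ?_⟩
    calc
      w x + machineLoad w s a q ≤ w x + (p * M - w x) / p := by
        gcongr
        exact hq.trans (by gcongr; linarith)
      _ = M + (p - 1) / p * w x := by field_simp; ring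
      _ ≤ M + (p - 1) / p * (p * M / (p + 1)) := by
        have : 0 ≤ (p - 1) / p := div_nonneg (sub_nonneg.mpr one_le_card) (by positivity)
        gcongr
      _ = 2 * p / (p + 1) * M := by field_simp; ring

theorem load_balancing_general (hw : ∀ i ∈ s, 0 ≤ w i) (hwM : ∀ i ∈ s, w i ≤ M)
    (haverage : (∑ i ∈ s, w i) / Fintype.card κ ≤ M) :
    ∃ a : ι → κ, ∀ q,
      machineLoad w s a q ≤ 2 * Fintype.card κ / (Fintype.card κ + 1) * M := by
  classical
  have card_pos : (0 : K) < Fintype.card κ := Nat.cast_pos.mpr Fintype.card_pos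
  induction s using induction_on_min_value w with
  | empty =>
    have M_nonneg : 0 ≤ M := by simpa using haverage
    refine ⟨fun _ ↦ Classical.arbitrary κ, fun q ↦ ?_⟩
    rw [machineLoad, filter_empty, sum_empty]
    positivity
  | insert x s hx hmin ih =>
    rw [forall_mem_insert] at hw hwM
    rw [div_le_iff₀' card_pos, sum_insert hx] at haverage
    obtain ⟨a, ha⟩ := ih hw.2 hwM.2 (by rw [div_le_iff₀' card_pos]; linarith)
    obtain ⟨q, hq⟩ := exists_add_machineLoad_le hw.1 hwM.1 hmin haverage a
    refine ⟨Function.update a x q, ?_⟩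
    rw [machineLoad_insert_update w hx]
    exact (Function.forall_update_iff _ fun _ load ↦ load ≤ _).mpr ⟨hq, fun r _ ↦ ha r⟩

end Greedy

theorem two_mul_div_add_one_le {K : Type*} [Field K] [LinearOrder K] [IsStrictOrderedRing K]
    {x : K} (hx : 1 ≤ x) : 2 * x / (x + 1) ≤ 2 - 3 / (2 * x + 1) := by
  have : 2 - 3 / (2 * x + 1) - 2 * x / (x + 1) = (x - 1) / ((2 * x + 1) * (x + 1)) := by
    field_simp
    ring
  have : 0 ≤ (x - 1) / ((2 * x + 1) * (x + 1)) :=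
    div_nonneg (sub_nonneg.mpr hx) (by positivity)
  linarith

/-- Load-balancing lemma: if every weight is below `max(S/p, C)`, the tasks can
be partitioned into `p` parts each of total weight at most
`β · max(S/p, C)` with `β = max(2 - 3/(2p+1), 2 - (p+2)/(4p+2))`. -/
theorem load_balancing
    (p : ℕ) (hp : 1 ≤ p) (C : ℝ) (hC : 0 < C)
    (n : ℕ) (w : Fin n → ℝ) (hw : ∀ i, 0 < w i)
    (S : ℝ) (hS : S = ∑ i, w i)
    (hsmall : ∀ i, w i < max (S / (p : ℝ)) C)
    (β : ℝ)
    (hβ : β = max (2 - 3 / (2 * (p : ℝ) + 1)) (2 - ((p : ℝ) + 2) / (4 * (p : ℝ) + 2))) :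
    ∃ a : Fin n → Fin p, ∀ q : Fin p,
      (∑ i ∈ Finset.univ.filter (fun i => a i = q), w i) ≤
        β * max (S / (p : ℝ)) C := by
  have : Nonempty (Fin p) := ⟨⟨0, hp⟩⟩
  have ratio_le : 2 * (p : ℝ) / (p + 1) ≤ β :=
    hβ ▸ le_max_of_le_left (two_mul_div_add_one_le (Nat.one_le_cast.mpr hp))
  obtain ⟨a, ha⟩ := load_balancing_general (κ := Fin p) (s := univ)
    (fun i _ ↦ (hw i).le) (fun i _ ↦ (hsmall i).le) (by simp [hS])
  rw [Fintype.card_fin] at ha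
  exact ⟨a, fun q ↦ (ha q).trans (by gcongr)⟩
end
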